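/- Let k = ℚ(t) with the derivation t′ = 1. Every differential field extension (M,′) of (k,′) containing two distinct elements σ₁ ≠ σ₂ with σ₁′ = σ₁² − t and σ₂′ = σ₂² − t has transcendence degree at least 2 over k. -/

import Mathlib

open scoped TensorProduct

/-- A derivation on a (possibly noncommutative) ring: an additive map satisfying the
Leibniz rule. -/
structure IsRingDeriv {A : Type*} [Ring A] (d : A → A) : Prop where
  map_add : ∀ x y, d (x + y) = d x + d y
  leibniz : ∀ x y, d (x * y) = d x * y + x * d y

/-- The derivation `d` on the `k`-algebra `A` restricts to the derivation `δ` on `k`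
(along `algebraMap k A`). -/
def RestrictsTo {k A : Type*} [CommRing k] [Ring A] [Algebra k A]
    (δ : k → k) (d : A → A) : Prop :=
  ∀ c : k, d (algebraMap k A c) = algebraMap k A (δ c)

/-- The transcendence degree of `L` over `k` is at least `n`: there are `n` algebraically
independent elements. -/
def TrdegGE (k L : Type*) [CommRing k] [CommRing L] [Algebra k L] (n : ℕ) : Prop :=
  ∃ f : Fin n → L, AlgebraicIndependent k f

/-- The transcendence degree of `L` over `k` is at most `n`: there is no algebraically
independent family of `n + 1` elements. -/
def TrdegLE (k L : Type*) [CommRing k] [CommRing L] [Algebra k L] (n : ℕ) : Prop :=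
  ∀ f : Fin (n + 1) → L, ¬ AlgebraicIndependent k f

namespace Airy
open Polynomial

lemma pos_add {p q : ℚ[X]} (hp : 0 < p.leadingCoeff) (hq : 0 ≤ q.leadingCoeff) :
    0 < (p + q).leadingCoeff := by
  rcases lt_trichotomy p.degree q.degree with h | h | h
  · rw [leadingCoeff_add_of_degree_lt h]
    refine lt_of_le_of_ne hq (Ne.symm ?_)
    rw [Ne, leadingCoeff_eq_zero]
    rintro rfl
    simp at h
  · rw [leadingCoeff_add_of_degree_eq h (by positivity)]
    positivity
  · rwa [leadingCoeff_add_of_degree_lt' h]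

lemma nn_add {p q : ℚ[X]} (hp : 0 ≤ p.leadingCoeff) (hq : 0 ≤ q.leadingCoeff) :
    0 ≤ (p + q).leadingCoeff := by
  rcases hp.eq_or_lt with h | h
  · have : p = 0 := by rw [← leadingCoeff_eq_zero, ← h]
    simpa [this] using hq
  · exact (pos_add h hq).le

lemma pos_der {p : ℚ[X]} (hp : 0 < p.leadingCoeff) (hd : 0 < p.natDegree) :
    0 < (derivative p).leadingCoeff := by
  rw [leadingCoeff_derivative]
  positivity

lemma nn_der {p : ℚ[X]} (hp : 0 ≤ p.leadingCoeff) :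
    0 ≤ (derivative p).leadingCoeff := by
  rw [leadingCoeff_derivative]
  positivity

lemma pos_smul {p : ℚ[X]} {m : ℕ} (hm : 0 < m) (h : 0 < (((m : ℕ) : ℚ[X]) * p).leadingCoeff) :
    0 < p.leadingCoeff := by
  rw [leadingCoeff_mul, ← C_eq_natCast, leadingCoeff_C] at h
  exact pos_of_mul_pos_right h (by positivity)

lemma core_nn (n : ℕ) (hn : 1 ≤ n) (c : ℚ[X]) (hc : 0 ≤ c.leadingCoeff) (r : ℕ → ℚ[X])
    (h0 : r 0 = 0) (h1 : 0 < (r 1).leadingCoeff)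
    (hr : ∀ j ≤ n, ((j + 1 : ℕ) : ℚ[X]) * r (j + 2) =
      derivative (r (j + 1)) + c * r (j + 1) + X * (((n + 1 - j : ℕ) : ℚ[X]) * r j)) :
    0 < (r (n + 2)).leadingCoeff := by
  have cX : ∀ (m : ℕ) (p : ℚ[X]), (X * ((m : ℚ[X]) * p)).leadingCoeff = m * p.leadingCoeff := by
    intro m p
    rw [leadingCoeff_mul, leadingCoeff_mul, ← C_eq_natCast, leadingCoeff_C, leadingCoeff_X, one_mul]
  have A : ∀ p : ℚ[X], 0 ≤ p.leadingCoeff → 0 ≤ (derivative p + c * p).leadingCoeff := by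
    intro p hp
    exact nn_add (nn_der hp) (by rw [leadingCoeff_mul]; positivity)
  have h2 : 0 ≤ (r 2).leadingCoeff := by
    have := hr 0 (by omega)
    simp only [h0, mul_zero, add_zero, zero_add, Nat.cast_one, one_mul] at this
    rw [this]
    exact A _ h1.le
  -- the general step
  have S : ∀ j ≤ n, 0 < (r j).leadingCoeff → 0 ≤ (r (j+1)).leadingCoeff →
      0 < (r (j+2)).leadingCoeff := by
    intro j hj a b
    apply pos_smul (Nat.succ_pos j)
    rw [Nat.succ_eq_add_one, hr j hj, add_comm]
    apply pos_add _ (A _ b)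
    rw [cX]
    have : 0 < n + 1 - j := by omega
    positivity
  have h3 := S 1 hn h1 h2
  have hE := hr 1 hn
  have h3d : 0 < (r 3).natDegree := by
    by_contra hcon
    have hz : (r 3).natDegree = 0 := by omega
    have h4 : 0 < (X * (((n + 1 - 1 : ℕ) : ℚ[X]) * r 1)).leadingCoeff := by
      rw [cX]
      have : 0 < n + 1 - 1 := by omega
      positivity
    -- degree of the sum
    have h5 : (r 1).natDegree + 1 ≤ (((1 + 1 : ℕ) : ℚ[X]) * r (1 + 2)).natDegree := by
      rw [hE]
      have h6 : (X * (((n + 1 - 1 : ℕ) : ℚ[X]) * r 1)).natDegree = (r 1).natDegree + 1 := by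
        rw [← C_eq_natCast, natDegree_X_mul, natDegree_C_mul]
        · have : n ≠ 0 := by omega
          simpa using this
        · intro h
          have h : r 1 = 0 := by
            rcases mul_eq_zero.1 h with h | h
            · have h' : n ≠ 0 := by omega
              simp [h'] at h
            · exact h
          rw [h, leadingCoeff_zero] at h1
          exact h1.false
      rw [← h6]
      by_contra hlt
      push Not at hlt
      have hA := A _ h2
      set p := derivative (r (1+1)) + c * r (1+1) with hp
      set q := X * (((n + 1 - 1 : ℕ) : ℚ[X]) * r 1) with hq
      have e1 : (p + q).coeff q.natDegree = 0 := coeff_eq_zero_of_natDegree_lt hlt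
      have e2 : p.natDegree = q.natDegree := by
        rcases lt_trichotomy p.natDegree q.natDegree with h | h | h
        · rw [natDegree_add_eq_right_of_natDegree_lt h] at hlt; omega
        · exact h
        · rw [natDegree_add_eq_left_of_natDegree_lt h] at hlt; omega
      have e3 : p.coeff q.natDegree = p.leadingCoeff := by rw [← e2]; rfl
      rw [coeff_add, e3] at e1
      change _ + q.leadingCoeff = 0 at e1
      have hA' : 0 ≤ p.leadingCoeff := hA
      linarith
    rw [← C_eq_natCast, natDegree_C_mul (by norm_num), show 1 + 2 = 3 from rfl] at h5
    omega
  have T : ∀ j, j + 3 ≤ n + 2 → 0 < (r (j+3)).leadingCoeff ∧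
      (j + 4 ≤ n + 2 → 0 < (r (j+4)).leadingCoeff) := by
    intro j
    induction j with
    | zero =>
      intro _
      refine ⟨h3, fun h => ?_⟩
      apply pos_smul (Nat.succ_pos 2)
      rw [Nat.succ_eq_add_one]
      erw [hr 2 (by omega)]
      rw [add_assoc]
      apply pos_add (pos_der h3 h3d)
      apply nn_add
      · rw [leadingCoeff_mul]; positivity
      · rw [cX]; positivity
    | succ j ih =>
      intro h
      have a := (ih (by omega)).1
      have b := (ih (by omega)).2 (by omega)
      exact ⟨b, fun h' => S (j+3) (by omega) a b.le⟩
  obtain ⟨m, rfl⟩ : ∃ m, n = m + 1 := ⟨n - 1, by omega⟩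
  exact (T m (by omega)).1

lemma core_neg (n : ℕ) (c : ℚ[X]) (hc : 0 < c.leadingCoeff) (r : ℕ → ℚ[X])
    (h0 : r 0 = 0) (h1 : 0 < (r 1).leadingCoeff)
    (hr : ∀ j ≤ n, ((j + 1 : ℕ) : ℚ[X]) * r (j + 2) =
      - derivative (r (j + 1)) + c * r (j + 1) + X * (((n + 1 - j : ℕ) : ℚ[X]) * r j)) :
    0 < (r (n + 2)).leadingCoeff := by
  have A : ∀ p : ℚ[X], 0 < p.leadingCoeff → 0 < (-derivative p + c * p).leadingCoeff := by
    intro p hp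
    have hp0 : p ≠ 0 := by rintro rfl; simp at hp
    have hc0 : c ≠ 0 := by rintro rfl; simp at hc
    rw [leadingCoeff_add_of_degree_lt]
    · rw [leadingCoeff_mul]; positivity
    · rw [degree_neg]
      refine (degree_derivative_lt hp0).trans_le ?_
      rw [degree_mul]
      exact le_add_of_nonneg_left (zero_le_degree_iff.2 hc0)
  have T : ∀ j ≤ n + 1, 0 ≤ (r j).leadingCoeff ∧ 0 < (r (j+1)).leadingCoeff := by
    intro j
    induction j with
    | zero => intro _; exact ⟨by simp [h0], h1⟩
    | succ j ih =>
      intro hj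
      obtain ⟨a, b⟩ := ih (by omega)
      refine ⟨b.le, ?_⟩
      apply pos_smul (Nat.succ_pos j)
      rw [Nat.succ_eq_add_one, hr j (by omega)]
      apply pos_add (A _ b)
      rw [leadingCoeff_mul, leadingCoeff_mul, ← C_eq_natCast, leadingCoeff_C, leadingCoeff_X, one_mul]
      positivity
  exact (T (n+1) le_rfl).2

lemma core_pos (n : ℕ) (hn : 1 ≤ n) (c : ℚ[X]) (r : ℕ → ℚ[X])
    (h0 : r 0 = 0) (h1 : 0 < (r 1).leadingCoeff)
    (hr : ∀ j ≤ n, ((j + 1 : ℕ) : ℚ[X]) * r (j + 2) =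
      derivative (r (j + 1)) + c * r (j + 1) + X * (((n + 1 - j : ℕ) : ℚ[X]) * r j)) :
    r (n + 2) ≠ 0 := by
  intro hcon
  rcases le_or_gt 0 c.leadingCoeff with hc | hc
  · have := core_nn n hn c hc r h0 h1 hr
    simp [hcon] at this
  · have := core_neg n (-c) (by rw [leadingCoeff_neg]; linarith) (fun j => (-1)^(j+1) * r j)
      (by simp [h0]) (by simpa using h1) (by
        intro j hj
        have e : ∀ m : ℕ, ∀ p : ℚ[X], derivative ((-1)^m * p) = (-1)^m * derivative p := by
          intro m p
          have : ((-1:ℚ[X])^m) = C ((-1)^m) := by simp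
          rw [this, derivative_C_mul]
        rw [e]
        linear_combination (-1)^(j+1) * hr j hj)
    simp [hcon] at this

lemma core (n : ℕ) (hn : 1 ≤ n) (c : ℚ[X]) (r : ℕ → ℚ[X])
    (h0 : r 0 = 0) (h1 : r 1 ≠ 0)
    (hr : ∀ j ≤ n, ((j + 1 : ℕ) : ℚ[X]) * r (j + 2) =
      derivative (r (j + 1)) + c * r (j + 1) + X * (((n + 1 - j : ℕ) : ℚ[X]) * r j)) :
    r (n + 2) ≠ 0 := by
  have h1' : (r 1).leadingCoeff ≠ 0 := by simpa using h1
  rcases lt_or_gt_of_ne h1' with h | h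
  · have := core_pos n hn c (fun j => - r j) (by simp [h0])
      (by simp only [leadingCoeff_neg]; linarith) (by
        intro j hj
        simp only [derivative_neg]
        linear_combination - hr j hj)
    simpa using this
  · exact core_pos n hn c r h0 h hr

/-- core in terms of polynomial coefficients -/
lemma core' (n : ℕ) (hn : 1 ≤ n) (c : ℚ[X]) (P : ℚ[X][X]) (hP : P.natDegree = n)
    (h : ∀ i, derivative (P.coeff i) + ((i : ℚ[X]) - 1 - (n : ℚ[X])) * (if i = 0 then 0 else P.coeff (i - 1))
      - X * (((i : ℚ[X]) + 1) * P.coeff (i + 1)) = c * P.coeff i) : False := by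
  let r : ℕ → ℚ[X] := fun j => if j ≤ n + 1 then (-1)^j * (P.coeff (n + 1 - j)).comp (-X) else 0
  refine core n hn (c.comp (-X)) r ?_ ?_ ?_ ?_
  · have : P.coeff (n+1) = 0 := coeff_eq_zero_of_natDegree_lt (by omega)
    simp [r, this]
  · simp only [r]
    rw [if_pos (by omega)]
    have : P.coeff (n + 1 - 1) ≠ 0 := by
      rw [Nat.add_sub_cancel, ← hP]
      change P.leadingCoeff ≠ 0
      rw [Ne, leadingCoeff_eq_zero]
      rintro rfl
      simp at hP; omega
    intro hh
    rw [pow_one, neg_one_mul, neg_eq_zero] at hh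
    have h3 := congrArg (fun p => p.comp (-X : ℚ[X])) hh
    simp only [comp_assoc] at h3
    simp at h3
    exact this (by simpa using h3)
  · intro j hj
    obtain ⟨i, rfl⟩ := Nat.exists_eq_add_of_le hj
    have hi := congrArg (fun p => p.comp (-X : ℚ[X])) (h i)
    simp only [add_comp, sub_comp, mul_comp, X_comp, natCast_comp, one_comp] at hi
    have e : ∀ m : ℕ, ∀ p : ℚ[X], derivative ((-1)^m * p) = (-1)^m * derivative p := by
      intro m p
      have : ((-1:ℚ[X])^m) = C ((-1)^m) := by simp
      rw [this, derivative_C_mul]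
    have ed : ∀ p : ℚ[X], derivative (p.comp (-X)) = - (derivative p).comp (-X) := by
      intro p
      rw [derivative_comp]; simp
    simp only [r]
    rw [if_pos (show j + 1 ≤ j + i + 1 by omega), if_pos (show j ≤ j + i + 1 by omega), e, ed]
    rw [show j + i + 1 - (j + 1) = i by omega, show j + i + 1 - j = i + 1 by omega]
    rcases i with _ | i
    · rw [if_neg (by omega)]
      simp only [if_true, zero_comp] at hi
      push_cast at hi ⊢
      linear_combination (-1)^(j+1) * hi
    · rw [if_pos (by omega), show j + (i + 1) + 1 - (j + 2) = i by omega]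
      rw [if_neg (by omega), show i + 1 - 1 = i by omega] at hi
      push_cast at hi ⊢
      linear_combination (-1)^(j+1) * hi
  · simp [r]

lemma exists_gen {F : Type*} [Field F] (I : Ideal F[X][X]) (hI : I ≠ ⊥) :
    ∃ P ∈ I, P ≠ 0 ∧ ∀ Q ∈ I, Q.natDegree ≤ P.natDegree → ∃ e : F[X], Q = C e * P := by
  obtain ⟨P₀, hP₀, hP₀'⟩ := Submodule.exists_mem_ne_zero_of_ne_bot hI
  obtain ⟨P, ⟨hP, hP0⟩, hmin⟩ := WellFounded.has_min
    (InvImage.wf (fun P : F[X][X] => toLex (P.natDegree, P.leadingCoeff.natDegree))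
      (wellFounded_lt : WellFounded ((· < ·) : ℕ ×ₗ ℕ → ℕ ×ₗ ℕ → Prop)))
    {P | P ∈ I ∧ P ≠ 0} ⟨P₀, hP₀, hP₀'⟩
  refine ⟨P, hP, hP0, fun Q hQ hd => ?_⟩
  have ha : P.leadingCoeff ≠ 0 := by simpa using hP0
  set a := P.leadingCoeff with haa
  set g := Q.coeff P.natDegree with hg
  refine ⟨g / a, ?_⟩
  by_contra hne
  have hR : Q - C (g / a) * P ∈ I := I.sub_mem hQ (I.mul_mem_left _ hP)
  have hR0 : Q - C (g / a) * P ≠ 0 := sub_ne_zero.2 hne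
  have := hmin _ ⟨hR, hR0⟩
  apply this
  set R := Q - C (g / a) * P with hRR
  have hRd : R.natDegree ≤ P.natDegree :=
    (natDegree_sub_le _ _).trans (max_le hd (natDegree_C_mul_le _ _))
  have hRc : R.coeff P.natDegree = g % a := by
    rw [hRR, coeff_sub, coeff_C_mul, coeff_natDegree, ← hg, ← haa]
    have := EuclideanDomain.div_add_mod g a
    linear_combination -this
  change toLex (R.natDegree, R.leadingCoeff.natDegree) < toLex (P.natDegree, a.natDegree)
  rw [Prod.Lex.toLex_lt_toLex]
  rcases hRd.lt_or_eq with h | h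
  · exact Or.inl h
  · refine Or.inr ⟨h, ?_⟩
    have hl : R.leadingCoeff = g % a := by rw [← hRc, ← h]; rfl
    simp only
    have h0 : g % a ≠ 0 := by rw [← hl]; simpa using hR0
    rw [hl]
    apply natDegree_lt_natDegree h0
    exact EuclideanDomain.mod_lt g ha


section ext
variable {A B : Type*} [CommRing A] [CommRing B]

noncomputable def mc (d : A → A) (P : A[X]) : A[X] :=
  ∑ i ∈ Finset.range (P.natDegree + 1), monomial i (d (P.coeff i))

lemma d_zero {d : A → A} (hd : IsRingDeriv d) : d 0 = 0 := by
  have := hd.map_add 0 0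
  simpa using this

lemma d_one {d : A → A} (hd : IsRingDeriv d) : d 1 = 0 := by
  have := hd.leibniz 1 1
  simpa using this

lemma coeff_mc {d : A → A} (h0 : d 0 = 0) (P : A[X]) (i : ℕ) :
    (mc d P).coeff i = d (P.coeff i) := by
  rw [mc, finsetSum_coeff]
  simp only [coeff_monomial, Finset.sum_ite_eq', Finset.mem_range]
  split_ifs with h
  · rfl
  · rw [coeff_eq_zero_of_natDegree_lt (by omega), h0]

lemma mc_add {d : A → A} (hd : IsRingDeriv d) (P Q : A[X]) : mc d (P + Q) = mc d P + mc d Q := by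
  ext i
  simp [coeff_mc (d_zero hd), hd.map_add]

lemma mc_monomial {d : A → A} (hd : IsRingDeriv d) (n : ℕ) (a : A) :
    mc d (monomial n a) = monomial n (d a) := by
  ext i
  rw [coeff_mc (d_zero hd), coeff_monomial, coeff_monomial]
  split_ifs
  · rfl
  · exact d_zero hd

lemma mc_mul {d : A → A} (hd : IsRingDeriv d) (P Q : A[X]) :
    mc d (P * Q) = mc d P * Q + P * mc d Q := by
  induction P using Polynomial.induction_on' with
  | add p q hp hq => rw [add_mul, mc_add hd, hp, hq, mc_add hd]; ring
  | monomial n a =>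
    induction Q using Polynomial.induction_on' with
    | add p q hp hq => rw [mul_add, mc_add hd, hp, hq, mc_add hd]; ring
    | monomial m b =>
      simp only [monomial_mul_monomial, mc_monomial hd, hd.leibniz, map_add]

noncomputable def Dx (d : A → A) (g P : A[X]) : A[X] := mc d P + g * derivative P

lemma isRingDeriv_Dx {d : A → A} (hd : IsRingDeriv d) (g : A[X]) : IsRingDeriv (Dx d g) where
  map_add x y := by simp only [Dx, mc_add hd, derivative_add]; ring
  leibniz x y := by simp only [Dx, mc_mul hd, derivative_mul]; ring

lemma d_pow {d : B → B} (hd : IsRingDeriv d) (y : B) (n : ℕ) :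
    d (y ^ n) = n * y ^ (n - 1) * d y := by
  induction n with
  | zero => simp [d_one hd]
  | succ n ih =>
    rw [pow_succ, hd.leibniz, ih]
    rcases n with _ | n
    · simp
    · simp only [Nat.add_sub_cancel]; push_cast; ring

lemma d_eval {d : A → A} (hd : IsRingDeriv d) {dB : B → B} (hB : IsRingDeriv dB) (φ : A →+* B)
    (hφ : ∀ a, dB (φ a) = φ (d a)) (y : B) (g : A[X]) (hy : dB y = eval₂ φ y g) (P : A[X]) :
    dB (eval₂ φ y P) = eval₂ φ y (Dx d g P) := by
  induction P using Polynomial.induction_on' with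
  | add p q hp hq =>
    rw [eval₂_add, hB.map_add, hp, hq, (isRingDeriv_Dx hd g).map_add, eval₂_add]
  | monomial n a =>
    rw [Dx, mc_monomial hd, derivative_monomial, eval₂_add, eval₂_mul, eval₂_monomial,
      eval₂_monomial, eval₂_monomial, hB.leibniz, hφ, d_pow hB, hy]
    simp only [map_mul, map_natCast]
    ring

lemma mc_map {d : A → A} (hd : IsRingDeriv d) {dB : B → B} (hB : IsRingDeriv dB) (φ : A →+* B)
    (hφ : ∀ a, dB (φ a) = φ (d a)) (P : A[X]) : mc dB (P.map φ) = (mc d P).map φ := by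
  ext i
  simp [coeff_mc (d_zero hd), coeff_mc (d_zero hB), hφ]

lemma coeff_X_sq_der (P : A[X]) (i : ℕ) : (X ^ 2 * derivative P).coeff i =
    ((i : A) - 1) * (if i = 0 then 0 else P.coeff (i - 1)) := by
  rcases i with _ | _ | i
  · simp
  · simp [coeff_X_pow_mul']
  · rw [show i + 1 + 1 = i + 2 from rfl, coeff_X_pow_mul, coeff_derivative]
    simp
    ring

lemma coeff_X_mul'' (P : A[X]) (i : ℕ) : (X * P).coeff i =
    (if i = 0 then 0 else P.coeff (i - 1)) := by
  rcases i with _ | i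
  · simp
  · simp

end ext

lemma der_isRingDeriv : IsRingDeriv (fun p : ℚ[X] => derivative p) where
  map_add x y := by simp
  leibniz x y := by simp [derivative_mul]

lemma d_poly {d : RatFunc ℚ → RatFunc ℚ} (hd : IsRingDeriv d) (hX : d RatFunc.X = 1) (p : ℚ[X]) :
    d (algebraMap ℚ[X] (RatFunc ℚ) p) = algebraMap ℚ[X] (RatFunc ℚ) (derivative p) := by
  have hq : ∀ q : ℚ, d (algebraMap ℚ[X] (RatFunc ℚ) (C q)) = 0 := by
    intro q
    let D : RatFunc ℚ →+ RatFunc ℚ := ⟨⟨d, d_zero hd⟩, hd.map_add⟩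
    have h1 : algebraMap ℚ[X] (RatFunc ℚ) (C q) = (q : RatFunc ℚ) := by
      exact eq_ratCast ((algebraMap ℚ[X] (RatFunc ℚ)).comp C) q
    have h2 := map_ratCast_smul D (RatFunc ℚ) (RatFunc ℚ) q 1
    rw [h1]
    change D _ = 0
    have h4 : D 1 = 0 := d_one hd
    simpa [h4] using h2
  have h := d_eval (A := ℚ) (B := RatFunc ℚ) (d := fun _ => 0) ⟨by simp, by simp⟩ hd
    ((algebraMap ℚ[X] (RatFunc ℚ)).comp C) (fun a => by simpa using hq a) RatFunc.X 1 (by simpa using hX) p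
  have e : ∀ p : ℚ[X], eval₂ ((algebraMap ℚ[X] (RatFunc ℚ)).comp C) RatFunc.X p
      = algebraMap ℚ[X] (RatFunc ℚ) p := by
    intro p
    rw [← RatFunc.algebraMap_X, ← hom_eval₂, eval₂_C_X]
  rw [e, e] at h
  rw [h, Dx]
  congr 1
  have : mc (fun _ : ℚ => (0:ℚ)) p = 0 := by ext i; simp [coeff_mc]
  rw [this]; simp

/-- no Darboux polynomials -/
lemma no_darboux {d : RatFunc ℚ → RatFunc ℚ} (hd : IsRingDeriv d) (hX : d RatFunc.X = 1)
    (a : (RatFunc ℚ)[X]) (ha : a ≠ 0) (hdiv : a ∣ Dx d (X ^ 2 - C RatFunc.X) a) :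
    a.natDegree = 0 := by
  by_contra hdeg
  set ι := algebraMap ℚ[X] (RatFunc ℚ) with hι
  have hinj : Function.Injective ι := RatFunc.algebraMap_injective ℚ
  let I : Ideal ℚ[X][X] := Ideal.comap (mapRingHom ι) (Ideal.span {a})
  have memI : ∀ P, P ∈ I ↔ a ∣ P.map ι := by
    intro P
    rw [Ideal.mem_comap, Ideal.mem_span_singleton, coe_mapRingHom]
  have hI : I ≠ ⊥ := by
    obtain ⟨b, hb⟩ := IsLocalization.integerNormalization_map_to_map (nonZeroDivisors ℚ[X]) a
    intro h
    have h1 : IsLocalization.integerNormalization (nonZeroDivisors ℚ[X]) a ∈ I := by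
      rw [memI, hb]
      rw [Algebra.smul_def]
      exact Dvd.intro_left _ rfl
    rw [h, Ideal.mem_bot] at h1
    rw [h1, Polynomial.map_zero] at hb
    rw [eq_comm, smul_eq_zero] at hb
    rcases hb with hb | hb
    · exact nonZeroDivisors.ne_zero b.2 hb
    · exact ha hb
  obtain ⟨P, hPI, hP0, hmin⟩ := exists_gen I hI
  have hn : 1 ≤ P.natDegree := by
    by_contra hcon
    have h0 : P.natDegree = 0 := by omega
    have h1 := natDegree_le_of_dvd ((memI P).1 hPI)
      (by rwa [Ne, Polynomial.map_eq_zero_iff hinj])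
    rw [natDegree_map_eq_of_injective hinj] at h1
    omega
  let D := Dx (fun p : ℚ[X] => derivative p) (X ^ 2 - C X) P
  have hDI : D ∈ I := by
    rw [memI]
    have e : D.map ι = Dx d (X ^ 2 - C RatFunc.X) (P.map ι) := by
      simp only [D, Dx]
      rw [mc_map der_isRingDeriv hd ι (d_poly hd hX)]
      simp [derivative_map, hι]
    rw [e]
    obtain ⟨h, hh⟩ := (memI P).1 hPI
    rw [hh, (isRingDeriv_Dx hd _).leibniz]
    exact dvd_add (hdiv.mul_right _) (Dvd.intro _ rfl)
  let Q := D - C (P.natDegree : ℚ[X]) * (X * P)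
  have hQI : Q ∈ I := I.sub_mem hDI (I.mul_mem_left _ (I.mul_mem_left _ hPI))
  have hQc : ∀ i, Q.coeff i = derivative (P.coeff i) +
      ((i : ℚ[X]) - 1 - (P.natDegree : ℚ[X])) * (if i = 0 then 0 else P.coeff (i - 1))
      - X * (((i : ℚ[X]) + 1) * P.coeff (i + 1)) := by
    intro i
    simp only [Q, D, Dx, sub_mul]
    rw [coeff_sub, coeff_add, coeff_sub, coeff_mc (by simp), coeff_X_sq_der, coeff_C_mul,
      coeff_C_mul, coeff_X_mul'', coeff_derivative]
    ring
  have hQd : Q.natDegree ≤ P.natDegree := by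
    rw [natDegree_le_iff_coeff_eq_zero]
    intro i hi
    rw [hQc, coeff_eq_zero_of_natDegree_lt hi,
      coeff_eq_zero_of_natDegree_lt (show P.natDegree < i + 1 by omega), if_neg (by omega)]
    by_cases h : i = P.natDegree + 1
    · subst h; simp
    · rw [coeff_eq_zero_of_natDegree_lt (show P.natDegree < i - 1 by omega)]; simp
  obtain ⟨e, he⟩ := hmin Q hQI hQd
  refine core' P.natDegree hn e P rfl (fun i => ?_)
  rw [← hQc, he, coeff_C_mul]

theorem main
    (δk : RatFunc ℚ → RatFunc ℚ) (hδk : IsRingDeriv δk) (hX : δk RatFunc.X = 1)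
    (M : Type*) [Field M] [Algebra (RatFunc ℚ) M]
    (δM : M → M) (hδM : IsRingDeriv δM) (hres : RestrictsTo δk δM)
    (σ₁ σ₂ : M) (hne : σ₁ ≠ σ₂)
    (h₁ : δM σ₁ = σ₁ ^ 2 - algebraMap (RatFunc ℚ) M RatFunc.X)
    (h₂ : δM σ₂ = σ₂ ^ 2 - algebraMap (RatFunc ℚ) M RatFunc.X) :
    TrdegGE (RatFunc ℚ) M 2 := by
  set g : (RatFunc ℚ)[X] := X ^ 2 - C RatFunc.X with hg
  let D := Dx δk g
  have hD : IsRingDeriv D := isRingDeriv_Dx hδk g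
  have E1 : ∀ a : (RatFunc ℚ)[X], δM (aeval σ₁ a) = aeval σ₁ (D a) := by
    intro a
    exact d_eval hδk hδM (algebraMap (RatFunc ℚ) M) hres σ₁ g (by simp [hg, h₁]) a
  have T1 : Transcendental (RatFunc ℚ) σ₁ := by
    intro halg
    have hint := halg.isIntegral
    have h0 := minpoly.ne_zero hint
    have := no_darboux hδk hX (minpoly (RatFunc ℚ) σ₁) h0 (by
      apply minpoly.dvd
      change aeval σ₁ (D _) = 0
      rw [← E1, minpoly.aeval, d_zero hδM])
    exact (minpoly.natDegree_pos hint).ne' this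
  set w := σ₁ - σ₂ with hw
  have hw0 : w ≠ 0 := sub_ne_zero.2 hne
  set z := w⁻¹ with hz
  have hwz : w * z = 1 := mul_inv_cancel₀ hw0
  have hdw : δM w = w * (2 * σ₁ - w) := by
    have h3 := hδM.map_add w σ₂
    rw [show w + σ₂ = σ₁ by rw [hw]; ring, h₁, h₂] at h3
    have : σ₂ = σ₁ - w := by rw [hw]; ring
    rw [this] at h3
    linear_combination -h3
  have hdz : δM z = 1 - 2 * σ₁ * z := by
    have h3 := hδM.leibniz w z
    rw [hwz, d_one hδM, hdw] at h3
    apply mul_left_cancel₀ hw0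
    linear_combination -h3 + w * hwz
  let φ : (RatFunc ℚ)[X] →+* M := (aeval (R := RatFunc ℚ) σ₁).toRingHom
  have hφ : ∀ a, φ a = aeval σ₁ a := fun a => rfl
  let G : (RatFunc ℚ)[X][X] := 1 - C (2 * X) * X
  have E2 : ∀ P : (RatFunc ℚ)[X][X], δM (eval₂ φ z P) = eval₂ φ z (Dx D G P) := by
    intro P
    refine d_eval hD hδM φ E1 z G ?_ P
    rw [hdz, eval₂_sub, eval₂_one, eval₂_mul, eval₂_C, eval₂_X, hφ, map_mul, aeval_X, map_ofNat]
  have key : ∀ P : (RatFunc ℚ)[X][X], eval₂ φ z P = 0 → P = 0 := by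
    by_contra hcon
    push Not at hcon
    obtain ⟨P₀, hP₀, hP₀'⟩ := hcon
    let I : Ideal (RatFunc ℚ)[X][X] := RingHom.ker (eval₂RingHom φ z)
    have memI : ∀ P, P ∈ I ↔ eval₂ φ z P = 0 := fun P => RingHom.mem_ker
    have hI : I ≠ ⊥ := by
      intro h
      have := (memI P₀).2 hP₀
      rw [h] at this
      exact hP₀' this
    obtain ⟨P, hPI, hP0, hmin⟩ := exists_gen I hI
    have hn : 1 ≤ P.natDegree := by
      by_contra hc
      have h0 : P.natDegree = 0 := by omega
      rw [natDegree_eq_zero] at h0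
      obtain ⟨p, rfl⟩ := h0
      have h1 := (memI _).1 hPI
      rw [eval₂_C, hφ] at h1
      apply T1
      exact ⟨p, by simpa using hP0, h1⟩
    obtain ⟨m, hm⟩ : ∃ m, P.natDegree = m + 1 := ⟨P.natDegree - 1, by omega⟩
    let Q := Dx D G P + C (2 * X * (P.natDegree : (RatFunc ℚ)[X])) * P
    have hQI : Q ∈ I := by
      refine I.add_mem ?_ (I.mul_mem_left _ hPI)
      rw [memI, ← E2, (memI P).1 hPI, d_zero hδM]
    have hQc : ∀ i, Q.coeff i = D (P.coeff i) + P.coeff (i + 1) * ((i : (RatFunc ℚ)[X]) + 1)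
        - 2 * X * ((i : (RatFunc ℚ)[X]) * P.coeff i) + 2 * X * (P.natDegree : (RatFunc ℚ)[X]) * P.coeff i := by
      intro i
      simp only [Q, G]
      rw [Dx, sub_mul, one_mul, mul_assoc (C _) X, coeff_add, coeff_add, coeff_sub, coeff_C_mul,
        coeff_C_mul, coeff_mc (d_zero hD), coeff_derivative]
      rcases i with _ | i
      · simp
      · rw [coeff_X_mul, coeff_derivative]
        push_cast
        ring
    have hQd : Q.natDegree ≤ P.natDegree := by
      rw [natDegree_le_iff_coeff_eq_zero]
      intro i hi
      rw [hQc, coeff_eq_zero_of_natDegree_lt hi,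
        coeff_eq_zero_of_natDegree_lt (show P.natDegree < i + 1 by omega), d_zero hD]
      simp
    obtain ⟨e, he⟩ := hmin Q hQI hQd
    set a := P.coeff (m + 1) with ha
    have ha0 : a ≠ 0 := by
      rw [ha, ← hm]
      simpa using hP0
    have c1 : D a = e * a := by
      have := hQc (m + 1)
      rw [he, coeff_C_mul, coeff_eq_zero_of_natDegree_lt (show P.natDegree < m + 1 + 1 by omega),
        ← ha, hm] at this
      push_cast at this
      linear_combination -this
    have hadeg : a.natDegree = 0 := by
      apply no_darboux hδk hX a ha0
      exact Dvd.intro_left e c1.symm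
    obtain ⟨α, hα⟩ := natDegree_eq_zero.1 hadeg
    have hα0 : α ≠ 0 := by rintro rfl; simp at hα; exact ha0 hα.symm
    have hDα : D (C α) = C (δk α) := by
      change Dx δk g (C α) = _
      rw [Dx, ← monomial_zero_left, mc_monomial hδk]
      simp
    have hedeg : e = C (δk α / α) := by
      rw [← hα, hDα] at c1
      apply mul_right_cancel₀ (show C α ≠ 0 by simpa using hα0)
      rw [← c1, ← C_mul, div_mul_cancel₀ _ hα0]
    set b := P.coeff m with hb
    have c2 : D b + 2 * X * b + C ((m + 1) * α) = C (δk α / α) * b := by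
      have := hQc m
      rw [he, coeff_C_mul, ← ha, ← hb, hm, hedeg, ← hα] at this
      rw [this]
      simp only [map_mul, map_add, map_natCast, map_one]
      push_cast
      ring
    have hb0 : b = 0 := by
      by_contra hbne
      have c3 := congrArg (fun p => p.coeff (b.natDegree + 1)) c2
      simp only [D, Dx, hg, sub_mul, mul_assoc (2 : (RatFunc ℚ)[X])] at c3
      rw [coeff_add, coeff_add, coeff_add, coeff_sub, coeff_mc (d_zero hδk), coeff_X_sq_der,
        coeff_C_mul, coeff_C_mul, coeff_derivative, coeff_ofNat_mul, coeff_X_mul, coeff_C,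
        if_neg (by omega), if_neg (by omega), Nat.add_sub_cancel,
        coeff_eq_zero_of_natDegree_lt (show b.natDegree < b.natDegree + 1 by omega),
        coeff_eq_zero_of_natDegree_lt (show b.natDegree < b.natDegree + 1 + 1 by omega),
        d_zero hδk, coeff_natDegree] at c3
      have c4 : ((b.natDegree + 2 : ℕ) : RatFunc ℚ) * b.leadingCoeff = 0 := by
        push_cast at c3 ⊢
        linear_combination c3
      rcases mul_eq_zero.1 c4 with h | h
      · rw [Nat.cast_eq_zero] at h; omega
      · exact hbne (leadingCoeff_eq_zero.1 h)
    rw [hb0, d_zero hD] at c2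
    simp only [mul_zero, add_zero, zero_add, C_eq_zero, mul_eq_zero, hα0, or_false] at c2
    have : ((m + 1 : ℕ) : RatFunc ℚ) = 0 := by exact_mod_cast c2
    rw [Nat.cast_eq_zero] at this
    omega
  have hsingle : AlgebraicIndependent (RatFunc ℚ) (fun _ : Unit => σ₁) :=
    algebraicIndependent_unique_type_iff.2 T1
  have hopt := (hsingle.option_iff_transcendental z).2 (by
    rw [transcendental_iff]
    intro p hp
    let ψ : (RatFunc ℚ)[X] →+* Algebra.adjoin (RatFunc ℚ) (Set.range fun _ : Unit => σ₁) :=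
      (aeval (R := RatFunc ℚ) (⟨σ₁, Algebra.subset_adjoin ⟨(), rfl⟩⟩ :
        Algebra.adjoin (RatFunc ℚ) (Set.range fun _ : Unit => σ₁))).toRingHom
    have hψφ : ∀ a, (ψ a : M) = φ a := by
      intro a
      have := aeval_algebraMap_apply M (⟨σ₁, Algebra.subset_adjoin ⟨(), rfl⟩⟩ :
        Algebra.adjoin (RatFunc ℚ) (Set.range fun _ : Unit => σ₁)) a
      exact this.symm
    have hψs : Function.Surjective ψ := by
      rintro ⟨y, hy⟩
      have hy' := hy
      rw [Set.range_const, Algebra.adjoin_singleton_eq_range_aeval] at hy'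
      obtain ⟨a, ha⟩ := hy'
      exact ⟨a, Subtype.ext ((hψφ a).trans ha)⟩
    obtain ⟨P, rfl⟩ := map_surjective ψ hψs p
    have hP : P = 0 := by
      apply key
      rw [aeval_def, eval₂_map] at hp
      rw [← hp]
      congr 1
      exact RingHom.ext fun a => (hψφ a).symm
    simp [hP])
  exact ⟨_, hopt.comp (finSuccEquiv 1 |>.trans (Equiv.optionCongr (Equiv.equivPUnit.{1,1} (Fin 1))))
    (Equiv.injective _)⟩

end Airy

/-- Let `k = ℚ(t)` with `t′ = 1`. Every differential field extension
of `k` containing two distinct solutions of `X′ = X² − t` has transcendence degree at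
least `2` over `k`. -/
theorem stmt_11
    (δk : RatFunc ℚ → RatFunc ℚ) (hδk : IsRingDeriv δk) (hX : δk RatFunc.X = 1)
    (M : Type*) [Field M] [Algebra (RatFunc ℚ) M]
    (δM : M → M) (hδM : IsRingDeriv δM) (hres : RestrictsTo δk δM)
    (σ₁ σ₂ : M) (hne : σ₁ ≠ σ₂)
    (h₁ : δM σ₁ = σ₁ ^ 2 - algebraMap (RatFunc ℚ) M RatFunc.X)
    (h₂ : δM σ₂ = σ₂ ^ 2 - algebraMap (RatFunc ℚ) M RatFunc.X) :
    TrdegGE (RatFunc ℚ) M 2 := by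
  exact Airy.main δk hδk hX M δM hδM hres σ₁ σ₂ hne h₁ h₂
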